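/- Every still Life S ⊆ ℤ² has upper density at most 1/2. -/

import Mathlib

open Filter

/-- `y` is a neighbor of `x` in the 8-point (Moore) neighborhood of `ℤ²`. -/
def IsNbr (x y : ℤ × ℤ) : Prop :=
  y ≠ x ∧ |y.1 - x.1| ≤ 1 ∧ |y.2 - x.2| ≤ 1

/-- `N_S(x)`: the number of neighbors of `x` lying in `S`. -/
noncomputable def nbrCount (S : Set (ℤ × ℤ)) (x : ℤ × ℤ) : ℕ :=
  Set.ncard {y ∈ S | IsNbr x y}

/-- The box `B_r = {x : |x₁| < r, |x₂| < r}`. -/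
def box (r : ℕ) : Set (ℤ × ℤ) :=
  {x | |x.1| < (r : ℤ) ∧ |x.2| < (r : ℤ)}

/-- The upper density of `S ⊆ ℤ²`: `limsup_{r → ∞} |S ∩ B_r| / (2r-1)²`. -/
noncomputable def upperDensity (S : Set (ℤ × ℤ)) : ℝ :=
  limsup (fun r : ℕ => (Set.ncard (S ∩ box r) : ℝ) / (2 * (r : ℝ) - 1) ^ 2) atTop

/-- A still Life: a fixed point of the Game of Life transition rule. -/
def StillLife (S : Set (ℤ × ℤ)) : Prop :=
  (∀ x ∉ S, nbrCount S x ≠ 3) ∧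
  (∀ x ∈ S, 2 ≤ nbrCount S x) ∧
  (∀ x ∈ S, nbrCount S x ≤ 3)

/-!
Charge every 2 × 2 block of the plane twice its number of live cells. It suffices to let blocks
exchange charge along bounded translations so that each is left with at most 4: translations do not
affect means, so at most half of the cells are live. A block sends one unit diagonally across a
corner cell `v` when both its cells adjacent to `v` are dead, except that a block whose live cells
are `v` and the one opposite does so only if two more live cells behind `v` exhaust the three
neighbors allowed to `v`. A block with three or four live cells sends nothing, and because those
cells have almost no room for further neighbors it receives enough to pay for its excess of 2 or 4.
A block with two live cells on a diagonal receives at least as much as it sends, and every other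
block can afford what it sends.
-/

open Finset hiding box
open scoped BigOperators Pointwise symmDiff Topology

section Averaging

theorem abs_sum_sub_sum_le_card_symmDiff {α : Type*} [DecidableEq α] {f : α → ℝ} {C : ℝ}
    (hf : ∀ x, |f x| ≤ C) (s t : Finset α) :
    |∑ x ∈ s, f x - ∑ x ∈ t, f x| ≤ #(s ∆ t) * C := by
  have sum_le (u : Finset α) : |∑ x ∈ u, f x| ≤ #u * C := by
    simpa using (abs_sum_le_sum_abs f u).trans (sum_le_card_nsmul u _ C fun x _ => hf x)
  calc |∑ x ∈ s, f x - ∑ x ∈ t, f x| = |∑ x ∈ s \ t, f x - ∑ x ∈ t \ s, f x| := by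
        rw [sum_sdiff_sub_sum_sdiff]
    _ ≤ #(s \ t) * C + #(t \ s) * C := (abs_sub _ _).trans (add_le_add (sum_le _) (sum_le _))
    _ = #(s ∆ t) * C := by
        rw [symmDiff, sup_eq_union, card_union_of_disjoint disjoint_sdiff_sdiff]
        push_cast
        ring

variable {G α : Type*} [AddGroup G] [DecidableEq G] {l : Filter α} {F : α → Finset G}

/-- A Følner family of finite subsets of an additive group: translating by a fixed element changes
a vanishing proportion of the set. This is the finset counterpart of Mathlib's `IsAddFoelner`,
which is phrased in terms of an ambient measure. -/
structure IsFinsetFolner (l : Filter α) (F : α → Finset G) : Prop where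
  eventually_nonempty : ∀ᶠ i in l, (F i).Nonempty
  tendsto_card_symmDiff (g : G) :
    Tendsto (fun i => (#((g +ᵥ F i) ∆ F i) : ℝ) / #(F i)) l (𝓝 0)

theorem IsFinsetFolner.tendsto_expect_add_sub_expect (hF : IsFinsetFolner l F) {f : G → ℝ} {C : ℝ}
    (hf : ∀ x, |f x| ≤ C) (g : G) :
    Tendsto (fun i => 𝔼 x ∈ F i, f (g + x) - 𝔼 x ∈ F i, f x) l (𝓝 0) := by
  refine squeeze_zero_norm (fun i => ?_) (by simpa using (hF.tendsto_card_symmDiff g).mul_const C)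
  have translate : ∑ x ∈ F i, f (g + x) = ∑ x ∈ g +ᵥ F i, f x := by
    rw [← image_vadd, sum_image (AddAction.injective g).injOn]
    rfl
  rw [expect_eq_sum_div_card, expect_eq_sum_div_card, ← sub_div, Real.norm_eq_abs, abs_div,
    Nat.abs_cast, translate, div_mul_eq_mul_div]
  gcongr
  exact abs_sum_sub_sum_le_card_symmDiff hf _ _

/-- Discharging: if every point has charge at most `#K * δ` once each `i ∈ I` has moved its charge
`φ i` along the translation `v i`, then `f` has mean at most `δ`, since moving along a fixed
translation does not affect means in the limit. -/
theorem IsFinsetFolner.limsup_expect_le_of_discharging [l.NeBot] (hF : IsFinsetFolner l F)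
    {f : G → ℝ} {C : ℝ} (hf : ∀ x, |f x| ≤ C) {K : Finset G} (hK : K.Nonempty)
    {ι : Type*} {I : Finset ι} {φ : ι → G → ℝ} {D : ℝ} (hφ : ∀ i x, |φ i x| ≤ D) {v : ι → G} {δ : ℝ}
    (h : ∀ x, ∑ g ∈ K, f (g + x) + ∑ i ∈ I, φ i x ≤ #K * δ + ∑ i ∈ I, φ i (v i + x)) :
    limsup (fun n => 𝔼 x ∈ F n, f x) l ≤ δ := by
  let error (n : α) : ℝ := ∑ i ∈ I, (𝔼 x ∈ F n, φ i (v i + x) - 𝔼 x ∈ F n, φ i x)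
    - ∑ g ∈ K, (𝔼 x ∈ F n, f (g + x) - 𝔼 x ∈ F n, f x)
  have error_tendsto : Tendsto error l (𝓝 0) := by
    simpa only [sum_const_zero, sub_zero] using
      (tendsto_finsetSum I fun i _ => hF.tendsto_expect_add_sub_expect (hφ i) (v i)).sub
      (tendsto_finsetSum K fun g _ => hF.tendsto_expect_add_sub_expect hf g)
  have bound_tendsto : Tendsto (fun n => δ + error n / #K) l (𝓝 δ) := by
    simpa using (error_tendsto.div_const (#K : ℝ)).const_add δ
  have mean_le : ∀ᶠ n in l, 𝔼 x ∈ F n, f x ≤ δ + error n / #K := by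
    filter_upwards [hF.eventually_nonempty] with n hn
    have averaged := expect_le_expect (s := F n) fun x _ => h x
    simp only [expect_add_distrib, expect_sum_comm, expect_const hn] at averaged
    have card_pos : (0 : ℝ) < #K := by exact_mod_cast hK.card_pos
    rw [← sub_le_iff_le_add', le_div_iff₀ card_pos]
    simp only [error, sum_sub_distrib, sum_const, nsmul_eq_mul]
    linarith
  have mean_bounded_below : IsCoboundedUnder (· ≤ ·) l fun n => 𝔼 x ∈ F n, f x := by
    refine isCoboundedUnder_le_of_eventually_le l (x := -C) ?_
    filter_upwards [hF.eventually_nonempty] with n hn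
    exact le_expect hn fun x _ => neg_le_of_abs_le (hf x)
  exact (limsup_le_limsup mean_le mean_bounded_below bound_tendsto.isBoundedUnder_le).trans_eq
    bound_tendsto.limsup_eq

end Averaging

section Box

/-- The box `B_r` as a finset. -/
noncomputable def finsetBox (r : ℕ) : Finset (ℤ × ℤ) := Ioo (-r : ℤ) r ×ˢ Ioo (-r : ℤ) r

theorem coe_finsetBox (r : ℕ) : (finsetBox r : Set (ℤ × ℤ)) = box r := by
  ext
  simp [finsetBox, box, abs_lt]

theorem finsetBox_mono : Monotone finsetBox := fun r s hrs => by
  have : (r : ℤ) ≤ s := by exact_mod_cast hrs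
  unfold finsetBox
  gcongr

theorem card_finsetBox {r : ℕ} (hr : 1 ≤ r) : (#(finsetBox r) : ℝ) = (2 * r - 1) ^ 2 := by
  have side : (((r : ℤ) - -r - 1).toNat : ℝ) = 2 * r - 1 := by
    rw [show (r : ℤ) - -r - 1 = ((2 * r - 1 : ℕ) : ℤ) by omega, Int.toNat_natCast,
      Nat.cast_sub (by omega)]
    push_cast
    ring
  rw [finsetBox, card_product, Int.card_Ioo, Nat.cast_mul, side, sq]

theorem symmDiff_vadd_finsetBox_subset {g : ℤ × ℤ} {m : ℕ} (h₁ : |g.1| ≤ m) (h₂ : |g.2| ≤ m)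
    (r : ℕ) : (g +ᵥ finsetBox r) ∆ finsetBox r ⊆ finsetBox (r + m) \ finsetBox (r - m) := by
  intro x
  rw [abs_le] at h₁ h₂
  simp only [mem_symmDiff, Finset.mem_sdiff, ← neg_vadd_mem_iff, finsetBox, mem_product, mem_Ioo,
    vadd_eq_add, Prod.fst_add, Prod.snd_add, Prod.fst_neg, Prod.snd_neg]
  omega

theorem isFinsetFolner_finsetBox : IsFinsetFolner atTop finsetBox where
  eventually_nonempty := by
    filter_upwards [eventually_ge_atTop 1] with r hr
    exact ⟨0, by simp [finsetBox]; omega⟩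
  tendsto_card_symmDiff g := by
    obtain ⟨m, h₁, h₂⟩ : ∃ m : ℕ, |g.1| ≤ m ∧ |g.2| ≤ m :=
      ⟨max g.1.natAbs g.2.natAbs, by simp, by simp⟩
    have card_le {r : ℕ} (hr : m + 1 ≤ r) :
        (#((g +ᵥ finsetBox r) ∆ finsetBox r) : ℝ) ≤ 8 * m * (2 * r - 1) := by
      have hle := card_le_card (symmDiff_vadd_finsetBox_subset h₁ h₂ r)
      rw [card_sdiff_of_subset (finsetBox_mono (by omega))] at hle
      calc (#((g +ᵥ finsetBox r) ∆ finsetBox r) : ℝ)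
          ≤ #(finsetBox (r + m)) - #(finsetBox (r - m)) := by
            rw [← Nat.cast_sub (card_le_card (finsetBox_mono (by omega)))]
            exact_mod_cast hle
        _ = 8 * m * (2 * r - 1) := by
            rw [card_finsetBox (by omega), card_finsetBox (by omega), Nat.cast_sub (by omega)]
            push_cast
            ring
    have hden : Tendsto (fun r : ℕ => 2 * (r : ℝ) - 1) atTop atTop :=
      tendsto_atTop_add_const_right _ _
        (tendsto_natCast_atTop_atTop.const_mul_atTop (by norm_num))
    refine squeeze_zero' (.of_forall fun r => by positivity) ?_ (hden.const_div_atTop (8 * m : ℝ))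
    filter_upwards [eventually_ge_atTop (m + 1)] with r hr
    have hr' : (1 : ℝ) ≤ r := by exact_mod_cast (by omega : 1 ≤ r)
    have hpos : 0 < 2 * (r : ℝ) - 1 := by linarith
    rw [card_finsetBox (by omega), div_le_div_iff₀ (by positivity) hpos]
    nlinarith [card_le hr]

theorem upperDensity_eq_limsup_expect (S : Set (ℤ × ℤ)) :
    upperDensity S = limsup (fun r => 𝔼 x ∈ finsetBox r, S.indicator (1 : ℤ × ℤ → ℝ) x) atTop := by
  classical
  refine limsup_congr ?_
  filter_upwards [eventually_ge_atTop 1] with r hr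
  rw [expect_eq_sum_div_card, card_finsetBox hr, ← coe_finsetBox, Set.inter_comm]
  simp only [Set.indicator_apply, Pi.one_apply, sum_boole]
  rw [← Set.ncard_coe_finset, coe_filter]
  rfl

end Box

section Blocks

theorem nbrCount_preimage {e : ℤ × ℤ ≃ ℤ × ℤ} (he : ∀ x y, IsNbr (e x) (e y) ↔ IsNbr x y)
    (S : Set (ℤ × ℤ)) (x : ℤ × ℤ) : nbrCount (e ⁻¹' S) x = nbrCount S (e x) := by
  have preimage_nbrs : {y ∈ e ⁻¹' S | IsNbr x y} = e ⁻¹' {y ∈ S | IsNbr (e x) y} := by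
    ext
    simp [he]
  rw [nbrCount, preimage_nbrs,
    Set.ncard_preimage_of_injective_subset_range e.injective fun y _ => e.surjective y, nbrCount]

theorem isNbr_add_left (p x y : ℤ × ℤ) : IsNbr (p + x) (p + y) ↔ IsNbr x y := by
  simp [IsNbr]

open scoped Classical in
theorem nbrCount_eq_sum (S : Set (ℤ × ℤ)) (a b : ℤ) : nbrCount S (a, b) =
    (if (a + 1, b) ∈ S then 1 else 0) + (if (a + 1, b + 1) ∈ S then 1 else 0)
    + (if (a, b + 1) ∈ S then 1 else 0) + (if (a - 1, b + 1) ∈ S then 1 else 0)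
    + (if (a - 1, b) ∈ S then 1 else 0) + (if (a - 1, b - 1) ∈ S then 1 else 0)
    + (if (a, b - 1) ∈ S then 1 else 0) + (if (a + 1, b - 1) ∈ S then 1 else 0) := by
  let nbrs : Finset (ℤ × ℤ) := {(a + 1, b), (a + 1, b + 1), (a, b + 1), (a - 1, b + 1),
    (a - 1, b), (a - 1, b - 1), (a, b - 1), (a + 1, b - 1)}
  have nbrs_eq : {y ∈ S | IsNbr (a, b) y} = ({y ∈ nbrs | y ∈ S} : Finset (ℤ × ℤ)) := by
    ext ⟨c, d⟩
    have isNbr_iff_mem : IsNbr (a, b) (c, d) ↔ (c, d) ∈ nbrs := by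
      simp only [IsNbr, nbrs, mem_insert, mem_singleton, Prod.mk.injEq, ne_eq, abs_le]
      omega
    simp [isNbr_iff_mem, and_comm]
  rw [nbrCount, nbrs_eq, Set.ncard_coe_finset, card_filter]
  simp only [nbrs]
  repeat rw [sum_insert (by simp <;> omega)]
  rw [sum_singleton]
  ring

/-- The cells of the 2 × 2 block with lower left cell `0`. The block at `p` is `p + corners`. -/
def corners : Finset (ℤ × ℤ) := {(0, 0), (1, 0), (0, 1), (1, 1)}

theorem sum_corners {M : Type*} [AddCommMonoid M] (f : ℤ × ℤ → M) :
    ∑ k ∈ corners, f k = f (0, 0) + f (1, 0) + f (0, 1) + f (1, 1) := by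
  simp [corners, add_assoc]

/-- The diagonal step from the corner `k` of a block to the opposite corner. -/
def inward (k : ℤ × ℤ) : ℤ × ℤ := (1 - 2 * k.1, 1 - 2 * k.2)

/-- The block with opposite corners `v` and `v + d`, where `d = (±1, ±1)`, sends one unit of charge
across `v` to the block with opposite corners `v` and `v - d`. -/
def Sends (S : Set (ℤ × ℤ)) (v d : ℤ × ℤ) : Prop :=
  v + (d.1, 0) ∉ S ∧ v + (0, d.2) ∉ S ∧
    (v ∈ S → v + d ∈ S → v - (d.1, 0) ∈ S ∧ v - (0, d.2) ∈ S)

theorem sends_mk_iff {S : Set (ℤ × ℤ)} {a b c d : ℤ} : Sends S (a, b) (c, d) ↔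
    (a + c, b) ∉ S ∧ (a, b + d) ∉ S ∧
      ((a, b) ∈ S → (a + c, b + d) ∈ S → (a - c, b) ∈ S ∧ (a, b - d) ∈ S) := by
  simp [Sends]

open scoped Classical in
/-- The number of live cells of the block at `p`. -/
noncomputable def blockCount (S : Set (ℤ × ℤ)) (p : ℤ × ℤ) : ℕ := #{k ∈ corners | p + k ∈ S}

open scoped Classical in
/-- The charge sent by the block at `p`. -/
noncomputable def sent (S : Set (ℤ × ℤ)) (p : ℤ × ℤ) : ℕ :=
  #{k ∈ corners | Sends S (p + k) (inward k)}

open scoped Classical in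
/-- The charge received by the block at `p`. The sender across its own corner `k` is the block at
`p + inward k`, so that `received` is a sum of translates of the terms of `sent`. -/
noncomputable def received (S : Set (ℤ × ℤ)) (p : ℤ × ℤ) : ℕ :=
  #{k ∈ corners | Sends S (p + inward k + k) (inward k)}

/-- The block at `p`, charged twice its number of live cells, is left with at most the average
charge 4 after the exchange. -/
def BlockBalanced (S : Set (ℤ × ℤ)) (p : ℤ × ℤ) : Prop :=
  2 * blockCount S p + sent S p ≤ 4 + received S p

open scoped Classical in
theorem blockCount_zero (S : Set (ℤ × ℤ)) : blockCount S 0 =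
    (if (0, 0) ∈ S then 1 else 0) + (if (1, 0) ∈ S then 1 else 0)
    + (if (0, 1) ∈ S then 1 else 0) + (if (1, 1) ∈ S then 1 else 0) := by
  simp only [blockCount, card_filter, sum_corners, zero_add]

open scoped Classical in
theorem sent_zero (S : Set (ℤ × ℤ)) : sent S 0 =
    (if Sends S (0, 0) (1, 1) then 1 else 0) + (if Sends S (1, 0) (-1, 1) then 1 else 0)
    + (if Sends S (0, 1) (1, -1) then 1 else 0) + (if Sends S (1, 1) (-1, -1) then 1 else 0) := by
  norm_num [sent, card_filter, sum_corners, inward, -sum_boole]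

open scoped Classical in
theorem received_zero (S : Set (ℤ × ℤ)) : received S 0 =
    (if Sends S (1, 1) (1, 1) then 1 else 0) + (if Sends S (0, 1) (-1, 1) then 1 else 0)
    + (if Sends S (1, 0) (1, -1) then 1 else 0) + (if Sends S (0, 0) (-1, -1) then 1 else 0) := by
  norm_num [received, card_filter, sum_corners, inward, -sum_boole]

theorem sends_preimage_add {S : Set (ℤ × ℤ)} {p v d : ℤ × ℤ} :
    Sends ((p + ·) ⁻¹' S) v d ↔ Sends S (p + v) d := by
  simp [Sends, add_assoc, add_sub_assoc]

theorem blockBalanced_preimage_add {S : Set (ℤ × ℤ)} {p : ℤ × ℤ} :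
    BlockBalanced ((p + ·) ⁻¹' S) 0 ↔ BlockBalanced S p := by
  classical
  simp [BlockBalanced, blockCount, sent, received, sends_preimage_add, add_assoc]

/-- The rotation by a right angle about the center of the block at `0`. -/
def quarterTurn : ℤ × ℤ ≃ ℤ × ℤ where
  toFun q := (1 - q.2, q.1)
  invFun q := (q.2, 1 - q.1)
  left_inv q := by simp
  right_inv q := by simp

theorem isNbr_quarterTurn (x y : ℤ × ℤ) :
    IsNbr (quarterTurn x) (quarterTurn y) ↔ IsNbr x y := by
  simp only [IsNbr, quarterTurn, Equiv.coe_fn_mk, ne_eq, Prod.ext_iff, abs_le]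
  omega

theorem sends_preimage_quarterTurn {S : Set (ℤ × ℤ)} {a b c d : ℤ} :
    Sends (quarterTurn ⁻¹' S) (a, b) (c, d) ↔ Sends S (1 - b, a) (-d, c) := by
  simp only [sends_mk_iff, Set.mem_preimage, quarterTurn, Equiv.coe_fn_mk, sub_add_eq_sub_sub,
    sub_sub_eq_add_sub, sub_neg_eq_add, ← sub_eq_add_neg, add_sub_right_comm]
  tauto

theorem blockBalanced_preimage_quarterTurn {S : Set (ℤ × ℤ)} :
    BlockBalanced (quarterTurn ⁻¹' S) 0 ↔ BlockBalanced S 0 := by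
  classical
  have blockCount_eq : blockCount (quarterTurn ⁻¹' S) 0 = blockCount S 0 := by
    norm_num [blockCount_zero, quarterTurn]
    ring
  have sent_eq : sent (quarterTurn ⁻¹' S) 0 = sent S 0 := by
    norm_num [sent_zero, sends_preimage_quarterTurn]
    ring
  have received_eq : received (quarterTurn ⁻¹' S) 0 = received S 0 := by
    norm_num [received_zero, sends_preimage_quarterTurn]
    ring
  rw [BlockBalanced, BlockBalanced, blockCount_eq, sent_eq, received_eq]

section Origin

variable {T : Set (ℤ × ℤ)}

theorem blockBalanced_of_no_diagonal (h₁ : (0, 0) ∈ T → (1, 1) ∉ T)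
    (h₂ : (1, 0) ∈ T → (0, 1) ∉ T) :
    BlockBalanced T 0 := by
  have sent_le : 2 * blockCount T 0 + sent T 0 ≤ 4 := by
    grind [blockCount_zero, sent_zero, sends_mk_iff]
  exact sent_le.trans (Nat.le_add_right _ _)

theorem blockBalanced_of_diagonal (deg₀₀ : nbrCount T (0, 0) ≤ 3) (deg₁₁ : nbrCount T (1, 1) ≤ 3)
    (h₀₀ : (0, 0) ∈ T) (h₁₀ : (1, 0) ∉ T) (h₀₁ : (0, 1) ∉ T) (h₁₁ : (1, 1) ∈ T) :
    BlockBalanced T 0 := by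
  have not_sends₁₀ : ¬Sends T (1, 0) (-1, 1) := by simp [sends_mk_iff, h₀₀]
  have not_sends₀₁ : ¬Sends T (0, 1) (1, -1) := by simp [sends_mk_iff, h₁₁]
  have dead_of_sends₀₀ : Sends T (0, 0) (1, 1) → (-1, 1) ∉ T ∧ (1, -1) ∉ T := by
    grind [nbrCount_eq_sum, sends_mk_iff]
  have dead_of_sends₁₁ : Sends T (1, 1) (-1, -1) → (2, 0) ∉ T ∧ (0, 2) ∉ T := by
    grind [nbrCount_eq_sum, sends_mk_iff]
  have receives₁₀ : (1, -1) ∉ T → (2, 0) ∉ T → Sends T (1, 0) (1, -1) := by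
    grind [nbrCount_eq_sum, sends_mk_iff]
  have receives₀₁ : (-1, 1) ∉ T → (0, 2) ∉ T → Sends T (0, 1) (-1, 1) := by
    grind [nbrCount_eq_sum, sends_mk_iff]
  have receives₀₀ : (-1, 1) ∈ T → (1, -1) ∈ T → Sends T (0, 0) (-1, -1) := by
    grind [nbrCount_eq_sum, sends_mk_iff]
  have receives₁₁ : (2, 0) ∈ T → (0, 2) ∈ T → Sends T (1, 1) (1, 1) := by
    grind [nbrCount_eq_sum, sends_mk_iff]
  -- Charge sent across one live corner only is returned across a dead corner, or else across the
  -- other live corner.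
  clear deg₀₀ deg₁₁
  grind [BlockBalanced, blockCount_zero, sent_zero, received_zero]

theorem blockBalanced_of_tromino (deg₀₀ : nbrCount T (0, 0) ≤ 3) (deg₁₁ : nbrCount T (1, 1) ≤ 3)
    (h₀₀ : (0, 0) ∈ T) (h₁₀ : (1, 0) ∈ T) (h₀₁ : (0, 1) ∉ T) (h₁₁ : (1, 1) ∈ T) :
    BlockBalanced T 0 := by
  have sent_eq_zero : sent T 0 = 0 := by simp [sent_zero, sends_mk_iff, h₀₀, h₁₀, h₁₁]
  have spare₀₀ : ¬((1, -1) ∈ T ∧ (-1, 1) ∈ T) := by grind [nbrCount_eq_sum]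
  have spare₁₁ : ¬((2, 0) ∈ T ∧ (0, 2) ∈ T) := by grind [nbrCount_eq_sum]
  have receives₀₀ : (1, -1) ∈ T ∨ (-1, 1) ∈ T → Sends T (0, 0) (-1, -1) := by
    grind [nbrCount_eq_sum, sends_mk_iff]
  have receives₁₁ : (2, 0) ∈ T ∨ (0, 2) ∈ T → Sends T (1, 1) (1, 1) := by
    grind [nbrCount_eq_sum, sends_mk_iff]
  have receives₁₀ : (1, -1) ∉ T → (2, 0) ∉ T → Sends T (1, 0) (1, -1) := by
    grind [nbrCount_eq_sum, sends_mk_iff]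
  have receives₀₁ : (-1, 1) ∉ T → (0, 2) ∉ T → Sends T (0, 1) (-1, 1) := by
    grind [nbrCount_eq_sum, sends_mk_iff]
  clear deg₀₀ deg₁₁
  grind [BlockBalanced, blockCount_zero, sent_zero, received_zero]

theorem blockBalanced_of_full (deg₀₀ : nbrCount T (0, 0) ≤ 3) (deg₁₁ : nbrCount T (1, 1) ≤ 3)
    (h₀₀ : (0, 0) ∈ T) (h₁₀ : (1, 0) ∈ T) (h₀₁ : (0, 1) ∈ T) (h₁₁ : (1, 1) ∈ T) :
    BlockBalanced T 0 := by
  have receives₀₀ : Sends T (0, 0) (-1, -1) := by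
    grind [nbrCount_eq_sum, sends_mk_iff]
  have receives₁₀ : Sends T (1, 0) (1, -1) := by
    grind [nbrCount_eq_sum, sends_mk_iff]
  have receives₀₁ : Sends T (0, 1) (-1, 1) := by
    grind [nbrCount_eq_sum, sends_mk_iff]
  have receives₁₁ : Sends T (1, 1) (1, 1) := by
    grind [nbrCount_eq_sum, sends_mk_iff]
  have sent_eq_zero : sent T 0 = 0 := by simp [sent_zero, sends_mk_iff, h₀₀, h₁₀, h₀₁, h₁₁]
  simp only [BlockBalanced, blockCount_zero, sent_eq_zero, received_zero, h₀₀, h₁₀, h₀₁, h₁₁,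
    receives₀₀, receives₁₀, receives₀₁, receives₁₁]
  norm_num

end Origin

theorem blockBalanced_zero_of_mem_diagonal {T : Set (ℤ × ℤ)} (h : ∀ x ∈ T, nbrCount T x ≤ 3)
    (h₀₀ : (0, 0) ∈ T) (h₁₁ : (1, 1) ∈ T) : BlockBalanced T 0 := by
  by_cases h₁₀ : (1, 0) ∈ T <;> by_cases h₀₁ : (0, 1) ∈ T
  · exact blockBalanced_of_full (h _ h₀₀) (h _ h₁₁) h₀₀ h₁₀ h₀₁ h₁₁
  · exact blockBalanced_of_tromino (h _ h₀₀) (h _ h₁₁) h₀₀ h₁₀ h₀₁ h₁₁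
  · rw [← blockBalanced_preimage_quarterTurn, ← blockBalanced_preimage_quarterTurn]
    have nbrCount_le (x : ℤ × ℤ) (hx : quarterTurn (quarterTurn x) ∈ T) :
        nbrCount (quarterTurn ⁻¹' (quarterTurn ⁻¹' T)) x ≤ 3 := by
      simpa only [nbrCount_preimage isNbr_quarterTurn] using h _ hx
    exact blockBalanced_of_tromino (nbrCount_le _ h₁₁) (nbrCount_le _ h₀₀) h₁₁ h₀₁ h₁₀ h₀₀
  · exact blockBalanced_of_diagonal (h _ h₀₀) (h _ h₁₁) h₀₀ h₁₀ h₀₁ h₁₁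

theorem blockBalanced_zero_of_forall_nbrCount_le {T : Set (ℤ × ℤ)} (h : ∀ x ∈ T, nbrCount T x ≤ 3) :
    BlockBalanced T 0 := by
  by_cases diagonal : (0, 0) ∈ T ∧ (1, 1) ∈ T
  · exact blockBalanced_zero_of_mem_diagonal h diagonal.1 diagonal.2
  by_cases antidiagonal : (1, 0) ∈ T ∧ (0, 1) ∈ T
  · rw [← blockBalanced_preimage_quarterTurn]
    exact blockBalanced_zero_of_mem_diagonal
      (fun x hx => (nbrCount_preimage isNbr_quarterTurn T x).trans_le (h _ hx))
      antidiagonal.1 antidiagonal.2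
  · exact blockBalanced_of_no_diagonal (not_and.1 diagonal) (not_and.1 antidiagonal)

theorem blockBalanced_of_forall_nbrCount_le {S : Set (ℤ × ℤ)} (h : ∀ x ∈ S, nbrCount S x ≤ 3)
    (p : ℤ × ℤ) : BlockBalanced S p := by
  rw [← blockBalanced_preimage_add]
  exact blockBalanced_zero_of_forall_nbrCount_le fun x hx =>
    (nbrCount_preimage (e := Equiv.addLeft p) (isNbr_add_left p) S x).trans_le (h _ hx)

end Blocks

open scoped Classical in
theorem stillLife_density_le_half_general (S : Set (ℤ × ℤ)) (h : ∀ x ∈ S, nbrCount S x ≤ 3) :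
    upperDensity S ≤ 1 / 2 := by
  let charge (k p : ℤ × ℤ) : ℝ := (if Sends S (p + k) (inward k) then 1 else 0) / 2
  have abs_indicator_le (x : ℤ × ℤ) : |S.indicator (1 : ℤ × ℤ → ℝ) x| ≤ 1 := by
    by_cases hx : x ∈ S <;> simp [hx]
  have abs_charge_le (k p : ℤ × ℤ) : |charge k p| ≤ 1 / 2 := by
    by_cases hs : Sends S (p + k) (inward k) <;> simp [charge, hs]
  rw [upperDensity_eq_limsup_expect]
  refine isFinsetFolner_finsetBox.limsup_expect_le_of_discharging abs_indicator_le
    (K := corners) (by simp [corners]) (I := corners) abs_charge_le (v := inward) fun p => ?_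
  have balanced : (2 * blockCount S p + sent S p : ℝ) ≤ 4 + received S p := by
    exact_mod_cast blockBalanced_of_forall_nbrCount_le h p
  simp only [charge, Set.indicator_apply, Pi.one_apply, ← sum_div, sum_boole, add_comm _ p]
  simp only [blockCount, sent, received] at balanced
  rw [show #corners = 4 from rfl]
  push_cast
  linarith

theorem stillLife_density_le_half (S : Set (ℤ × ℤ)) (h : StillLife S) :
    upperDensity S ≤ 1 / 2 :=
  stillLife_density_le_half_general S h.2.2
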